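/- Let g : [0,1] → (−∞,∞] be defined by g(p) = 1/(1−p) for p ∈ [0,1), and g(1) = ∞. Then ES^g(X) < ∞ for every X ∈ L^1; that is, an adjusted Expected Shortfall with a risk profile in G_VaR can be finite on all of L^1. In particular, ES^g(X) ≤ max{ES_q(X), 0} for any q ∈ (0,1) such that sup_{p∈[q,1]} ∫_p^1 VaR_r(X) dr < 1. -/

import Mathlib

open MeasureTheory Set Filter

variable {Ω : Type*} [MeasurableSpace Ω]

/-- An atomless probability space: every set of positive measure has a subset of
strictly smaller positive measure. -/
def Atomless (μ : Measure Ω) : Prop :=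
  ∀ A : Set Ω, MeasurableSet A → 0 < μ A →
    ∃ B : Set Ω, MeasurableSet B ∧ B ⊆ A ∧ 0 < μ B ∧ μ B < μ A

/-- Value at Risk at level `p`: the left `p`-quantile for `p ∈ (0,1]`, the essential
infimum for `p = 0`.  Values are extended reals. -/
noncomputable def VaR (μ : Measure Ω) (X : Ω → ℝ) (p : ℝ) : EReal :=
  if p = 0 then essInf (fun ω => (X ω : EReal)) μ
  else sInf ((fun x : ℝ => (x : EReal)) '' {x : ℝ | ENNReal.ofReal p ≤ μ {ω | X ω ≤ x}})

/-- Real-valued version of the left `p`-quantile, used as the integrand of ES. -/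
noncomputable def VaRr (μ : Measure Ω) (X : Ω → ℝ) (p : ℝ) : ℝ :=
  sInf {x : ℝ | ENNReal.ofReal p ≤ μ {ω | X ω ≤ x}}

/-- Expected Shortfall at level `p`: `(1/(1-p)) ∫_p^1 VaR_q(X) dq` for `p ∈ [0,1)`,
the essential supremum for `p = 1`. -/
noncomputable def ES (μ : Measure Ω) (X : Ω → ℝ) (p : ℝ) : EReal :=
  if p = 1 then essSup (fun ω => (X ω : EReal)) μ
  else (((1 - p)⁻¹ * ∫ q in Set.Ioo p 1, VaRr μ X q : ℝ) : EReal)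

/-- The `g`-adjusted Expected Shortfall, `sup_{p ∈ [0,1]} (ES_p(X) - g(p))`.
Note that in `EReal` one has `⊤ - ⊤ = ⊥`, matching the convention `∞ - ∞ = -∞`. -/
noncomputable def adjES (μ : Measure Ω) (g : ℝ → EReal) (X : Ω → ℝ) : EReal :=
  ⨆ p ∈ Set.Icc (0:ℝ) 1, (ES μ X p - g p)

/-- The class `𝒢` of risk profiles: increasing functions `[0,1] → (-∞,∞]` that are
not identically `∞`. -/
def IsRiskProfile (g : ℝ → EReal) : Prop :=
  MonotoneOn g (Set.Icc (0:ℝ) 1) ∧ (∀ p ∈ Set.Icc (0:ℝ) 1, g p ≠ ⊥) ∧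
    ∃ p ∈ Set.Icc (0:ℝ) 1, g p ≠ ⊤

/-- Second-order stochastic dominance: `SSD μ X Y` means `X ≥_SSD Y`, i.e. every
risk-averse agent prefers `X` to `Y` (positive values are losses). -/
def SSD (μ : Measure Ω) (X Y : Ω → ℝ) : Prop :=
  ∀ u : ℝ → ℝ, Monotone u → ConcaveOn ℝ Set.univ u →
    ∫ ω, u (-(Y ω)) ∂μ ≤ ∫ ω, u (-(X ω)) ∂μ

/-- The inf-convolution of the functionals `ρ_1, …, ρ_n`. -/
noncomputable def infConv (μ : Measure Ω) {n : ℕ} (ρ : Fin n → ((Ω → ℝ) → EReal))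
    (X : Ω → ℝ) : EReal :=
  ⨅ (Y : Fin n → Ω → ℝ) (_ : (∀ i, Integrable (Y i) μ) ∧ ∀ ω, (∑ i, Y i ω) = X ω),
    ∑ i, ρ i (Y i)

/-- The class `𝒢_VaR`: risk profiles finite on `[0,1)`, left-continuous on `[0,1]`
and right-continuous at `0`. -/
def GVaRProfile (g : ℝ → EReal) : Prop :=
  IsRiskProfile g ∧ (∀ p ∈ Set.Ico (0:ℝ) 1, g p ≠ ⊤) ∧
    (∀ p ∈ Set.Ioc (0:ℝ) 1, Filter.Tendsto g (nhdsWithin p (Set.Ico 0 p)) (nhds (g p))) ∧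
    Filter.Tendsto g (nhdsWithin 0 (Set.Ioc 0 1)) (nhds (g 0))

/-- The class `𝒢_ES`: profiles in `𝒢_VaR` such that `h_g(p) = (1-p)g(p)` is concave
on `(0,1)` and left-continuous at `1` (with `h_g(1) = 0` by the convention `0·∞ = 0`). -/
def GESProfile (g : ℝ → EReal) : Prop :=
  GVaRProfile g ∧ ConcaveOn ℝ (Set.Ioo (0:ℝ) 1) (fun p => (1 - p) * (g p).toReal) ∧
    Filter.Tendsto (fun p => (1 - p) * (g p).toReal) (nhdsWithin 1 (Set.Ico (0:ℝ) 1)) (nhds 0)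

/-! `VaR` is the quantile function of the law of `X`, so it is integrable on `(0, 1)`, and
`(1 - p) ES_p(X)`, which is the tail integral `∫_p^1 VaR_r(X) dr`, tends to `0` as `p → 1`. Hence
`ES_p(X) ≤ c / (1 - p) ≤ g(p)` for every `p` above some level `q < 1`, where the penalized value is
at most `0`. Below `q` it is at most `ES_q(X)`, because `ES` is increasing in the level and the
penalty is nonnegative. -/

section TailAverages

variable {f : ℝ → ℝ} {a b : ℝ}

theorem continuousOn_setIntegral_Ioo_left (hf : IntegrableOn f (Ioo a b)) :
    ContinuousOn (fun p ↦ ∫ x in Ioo p b, f x) (Icc a b) := by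
  rcases lt_or_ge b a with hba | hab
  · simp only [Icc_eq_empty_of_lt hba, continuousOn_empty]
  rw [← integrableOn_Icc_iff_integrableOn_Ioo, ← uIcc_of_le hab] at hf
  rw [← uIcc_of_le hab]
  refine (intervalIntegral.continuousOn_primitive_interval_left hf).congr fun p hp ↦ ?_
  rw [uIcc_of_le hab] at hp
  simp only [intervalIntegral.integral_of_le hp.2, integral_Ioc_eq_integral_Ioo]

theorem exists_forall_setIntegral_Ioo_lt (hf : IntegrableOn f (Ioo a b)) (hab : a < b)
    {c : ℝ} (hc : 0 < c) :
    ∃ q ∈ Ico a b, ∀ p ∈ Icc q b, ∫ x in Ioo p b, f x < c := by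
  have hcont := continuousOn_setIntegral_Ioo_left hf b (right_mem_Icc.2 hab.le)
  have hev : ∀ᶠ p in nhdsWithin b (Iic b), ∫ x in Ioo p b, f x < c := by
    rw [← nhdsWithin_Icc_eq_nhdsLE hab]
    exact hcont.eventually_lt_const (by simpa using hc)
  obtain ⟨l, hlb, hl⟩ := mem_nhdsLE_iff_exists_Icc_subset.1 hev
  exact ⟨max l a, ⟨le_max_right l a, max_lt hlb hab⟩,
    fun p hp ↦ hl ⟨(le_max_left l a).trans hp.1, hp.2⟩⟩

theorem monotoneOn_setAverage_Ioo_left (hmono : MonotoneOn f (Ioo a b))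
    (hf : IntegrableOn f (Ioo a b)) :
    MonotoneOn (fun p ↦ ⨍ x in Ioo p b, f x) (Ico a b) := by
  intro p hp q hq hpq
  rcases hpq.eq_or_lt with rfl | hpq
  · rfl
  have hqm : q ∈ Ioo a b := ⟨hp.1.trans_lt hpq, hq.2⟩
  have hleft : Ioc p q ⊆ Ioo a b := fun x hx ↦ ⟨hp.1.trans_lt hx.1, hx.2.trans_lt hq.2⟩
  have hright : Ioo q b ⊆ Ioo a b := Ioo_subset_Ioo_left hq.1
  have hleft_le : ⨍ x in Ioc p q, f x ≤ f q :=
    (convex_Iic (f q)).set_average_mem isClosed_Iic (by simpa using hpq) (by simp)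
      (ae_restrict_of_forall_mem measurableSet_Ioc fun x hx ↦ hmono (hleft hx) hqm hx.2)
      (hf.mono_set hleft)
  have hle_right : f q ≤ ⨍ x in Ioo q b, f x :=
    (convex_Ici (f q)).set_average_mem isClosed_Ici (by simpa using hq.2) (by simp)
      (ae_restrict_of_forall_mem measurableSet_Ioo fun x hx ↦ hmono hqm (hright hx) hx.1.le)
      (hf.mono_set hright)
  have hdisj : Disjoint (Ioc p q) (Ioo q b) :=
    disjoint_left.2 fun _ hx hx' ↦ hx.2.not_gt hx'.1
  have hseg := average_union_mem_segment hdisj.aedisjoint measurableSet_Ioo.nullMeasurableSet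
    (by simp) (by simp) (hf.mono_set hleft) (hf.mono_set hright)
  rw [Ioc_union_Ioo_eq_Ioo hpq.le hq.2, segment_eq_Icc (hleft_le.trans hle_right)] at hseg
  exact hseg.2

end TailAverages

section Quantile

open ProbabilityTheory

/-- The left quantile function of a probability measure on `ℝ`, that is, the left-continuous
generalized inverse of its distribution function. It may take junk values outside `(0, 1)`,
where the set can be empty or unbounded below. -/
noncomputable def quantile (ν : Measure ℝ) (p : ℝ) : ℝ :=
  sInf {x | p ≤ cdf ν x}

theorem quantile_le_iff (ν : Measure ℝ) {p : ℝ} (hp : p ∈ Ioo (0 : ℝ) 1) {x : ℝ} :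
    quantile ν p ≤ x ↔ p ≤ cdf ν x := by
  have hbdd : BddBelow {y | p ≤ cdf ν y} := by
    obtain ⟨a, ha⟩ := ((tendsto_cdf_atBot ν).eventually_lt_const hp.1).exists
    exact ⟨a, fun y hy ↦ ((monotone_cdf ν).reflect_lt (ha.trans_le hy)).le⟩
  have hne : {y | p ≤ cdf ν y}.Nonempty :=
    ((tendsto_cdf_atTop ν).eventually_const_le hp.2).exists
  refine ⟨fun h ↦ ?_, fun h ↦ csInf_le hbdd h⟩
  have hright : Tendsto (cdf ν) (nhdsWithin x (Ioi x)) (nhds (cdf ν x)) :=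
    ((cdf ν).right_continuous x).mono_left (nhdsWithin_mono _ Ioi_subset_Ici_self)
  refine ge_of_tendsto hright ?_
  filter_upwards [self_mem_nhdsWithin] with y hy
  obtain ⟨z, hz, hzy⟩ := exists_lt_of_csInf_lt hne (h.trans_lt hy)
  exact le_trans hz (monotone_cdf ν hzy.le)

theorem monotoneOn_quantile (ν : Measure ℝ) : MonotoneOn (quantile ν) (Ioo 0 1) := by
  intro p hp q hq hpq
  exact (quantile_le_iff ν hp).2 (hpq.trans ((quantile_le_iff ν hq).1 le_rfl))

theorem aemeasurable_quantile (ν : Measure ℝ) :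
    AEMeasurable (quantile ν) (volume.restrict (Ioo 0 1)) :=
  aemeasurable_restrict_of_monotoneOn measurableSet_Ioo (monotoneOn_quantile ν)

theorem map_quantile_restrict_volume (ν : Measure ℝ) [IsProbabilityMeasure ν] :
    (volume.restrict (Ioo 0 1)).map (quantile ν) = ν := by
  refine Measure.ext_of_Iic _ _ fun x ↦ ?_
  have hpre : quantile ν ⁻¹' Iic x ∩ Ioo 0 1 = Iic (cdf ν x) ∩ Ioo 0 1 := by
    ext p
    exact and_congr_left fun hp ↦ quantile_le_iff ν hp
  have hIoc : (Iic (cdf ν x) ∩ Ioo 0 1 : Set ℝ) =ᵐ[volume] Ioc 0 (cdf ν x) := by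
    have := (EventuallyEq.refl (ae volume) (Iic (cdf ν x))).inter (Ioo_ae_eq_Ioc (a := 0) (b := 1))
    rwa [inter_comm (Iic _) (Ioc _ _), Ioc_inter_Iic, inf_of_le_right (cdf_le_one ν x)] at this
  rw [Measure.map_apply_of_aemeasurable (aemeasurable_quantile ν) measurableSet_Iic,
    Measure.restrict_apply₀' measurableSet_Ioo.nullMeasurableSet, hpre, measure_congr hIoc,
    Real.volume_Ioc, sub_zero, ofReal_cdf]

theorem integrableOn_quantile {ν : Measure ℝ} [IsProbabilityMeasure ν] (hν : Integrable id ν) :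
    IntegrableOn (quantile ν) (Ioo 0 1) := by
  rw [← map_quantile_restrict_volume ν] at hν
  exact (integrable_map_measure aestronglyMeasurable_id (aemeasurable_quantile ν)).1 hν

end Quantile

section ExpectedShortfall

variable {μ : Measure Ω} {X : Ω → ℝ}

theorem ES_of_ne_one {p : ℝ} (hp : p ≠ 1) :
    ES μ X p = (((1 - p)⁻¹ * ∫ r in Ioo p 1, VaRr μ X r : ℝ) : EReal) :=
  if_neg hp

theorem ES_eq_setAverage {p : ℝ} (hp : p < 1) :
    ES μ X p = ((⨍ r in Ioo p 1, VaRr μ X r : ℝ) : EReal) := by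
  rw [ES_of_ne_one hp.ne, setAverage_eq, Real.volume_real_Ioo_of_le hp.le, smul_eq_mul]

theorem ES_ne_top {p : ℝ} (hp : p ≠ 1) : ES μ X p ≠ ⊤ := by
  rw [ES_of_ne_one hp]
  exact EReal.coe_ne_top _

theorem ES_le_div_iff {p c : ℝ} (hp : p < 1) :
    ES μ X p ≤ ((c / (1 - p) : ℝ) : EReal) ↔ ∫ r in Ioo p 1, VaRr μ X r ≤ c := by
  rw [ES_of_ne_one hp.ne, EReal.coe_le_coe_iff, inv_mul_eq_div,
    div_le_div_iff_of_pos_right (sub_pos.2 hp)]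

variable [IsProbabilityMeasure μ]

theorem VaRr_eq_quantile (hX : AEMeasurable X μ) : VaRr μ X = quantile (μ.map X) := by
  have := Measure.isProbabilityMeasure_map hX
  have hlaw (x : ℝ) : μ {ω | X ω ≤ x} = ENNReal.ofReal (ProbabilityTheory.cdf (μ.map X) x) := by
    rw [ProbabilityTheory.ofReal_cdf, Measure.map_apply_of_aemeasurable hX measurableSet_Iic]
    rfl
  funext p
  simp only [VaRr, quantile, hlaw,
    ENNReal.ofReal_le_ofReal_iff (ProbabilityTheory.cdf_nonneg _ _)]

theorem monotoneOn_VaRr (hX : AEMeasurable X μ) : MonotoneOn (VaRr μ X) (Ioo 0 1) := by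
  rw [VaRr_eq_quantile hX]
  exact monotoneOn_quantile _

theorem integrableOn_VaRr (hX : Integrable X μ) : IntegrableOn (VaRr μ X) (Ioo 0 1) := by
  have := Measure.isProbabilityMeasure_map hX.aemeasurable
  rw [VaRr_eq_quantile hX.aemeasurable]
  exact integrableOn_quantile
    ((integrable_map_measure aestronglyMeasurable_id hX.aemeasurable).2 hX)

theorem monotoneOn_ES (hX : Integrable X μ) : MonotoneOn (ES μ X) (Ico 0 1) := by
  intro p hp q hq hpq
  rw [ES_eq_setAverage hp.2, ES_eq_setAverage hq.2, EReal.coe_le_coe_iff]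
  exact monotoneOn_setAverage_Ioo_left (monotoneOn_VaRr hX.aemeasurable) (integrableOn_VaRr hX)
    hp hq hpq

theorem adjES_le_max_ES_zero (hX : Integrable X μ) {g : ℝ → EReal} {q : ℝ} (hq : q ∈ Ico (0 : ℝ) 1)
    (hg : ∀ p ∈ Ico 0 q, 0 ≤ g p) (hESg : ∀ p ∈ Icc q 1, ES μ X p ≤ g p) :
    adjES μ g X ≤ max (ES μ X q) 0 := by
  refine iSup₂_le fun p hp ↦ ?_
  rcases lt_or_ge p q with hpq | hqp
  · calc ES μ X p - g p ≤ ES μ X q - 0 :=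
          EReal.sub_le_sub (monotoneOn_ES hX ⟨hp.1, hpq.trans hq.2⟩ hq hpq.le) (hg p ⟨hp.1, hpq⟩)
      _ = ES μ X q := sub_zero _
      _ ≤ max (ES μ X q) 0 := le_max_left _ _
  · exact (EReal.sub_nonpos.2 (hESg p ⟨hqp, hp.2⟩)).trans (le_max_right _ _)

theorem adjES_le_max_ES_zero_of_setIntegral_le (hX : Integrable X μ) {c : ℝ} (hc : 0 ≤ c)
    {g : ℝ → EReal} (hg : ∀ p ∈ Ico (0 : ℝ) 1, ((c / (1 - p) : ℝ) : EReal) ≤ g p) (hg1 : g 1 = ⊤)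
    {q : ℝ} (hq : q ∈ Ico (0 : ℝ) 1) (htail : ∀ p ∈ Icc q 1, ∫ r in Ioo p 1, VaRr μ X r ≤ c) :
    adjES μ g X ≤ max (ES μ X q) 0 := by
  refine adjES_le_max_ES_zero hX hq (fun p hp ↦ ?_) fun p hp ↦ ?_
  · have hp1 : p < 1 := hp.2.trans hq.2
    exact (EReal.coe_nonneg.2 (div_nonneg hc (sub_nonneg.2 hp1.le))).trans (hg p ⟨hp.1, hp1⟩)
  · rcases hp.2.eq_or_lt with rfl | hp1
    · exact hg1 ▸ le_top
    · exact ((ES_le_div_iff hp1).2 (htail p hp)).trans (hg p ⟨hq.1.trans hp.1, hp1⟩)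

theorem stmt17_general (hX : Integrable X μ) {c : ℝ} (hc : 0 < c) {g : ℝ → EReal}
    (hg : ∀ p ∈ Ico (0 : ℝ) 1, ((c / (1 - p) : ℝ) : EReal) ≤ g p) (hg1 : g 1 = ⊤) :
    adjES μ g X ≠ ⊤ ∧
    ∀ q ∈ Ico (0 : ℝ) 1,
      sSup ((fun p ↦ ∫ r in Ioo p 1, VaRr μ X r) '' Icc q 1) ≤ c →
      adjES μ g X ≤ max (ES μ X q) 0 := by
  have hVaR : IntegrableOn (VaRr μ X) (Ioo 0 1) := integrableOn_VaRr hX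
  constructor
  · obtain ⟨q, hq, htail⟩ := exists_forall_setIntegral_Ioo_lt hVaR one_pos hc
    have hle := adjES_le_max_ES_zero_of_setIntegral_le hX hc.le hg hg1 hq fun p hp ↦ (htail p hp).le
    exact (hle.trans_lt (max_lt (ES_ne_top hq.2.ne).lt_top EReal.zero_lt_top)).ne
  · intro q hq hsup
    have hbdd : BddAbove ((fun p ↦ ∫ r in Ioo p 1, VaRr μ X r) '' Icc q 1) :=
      isCompact_Icc.bddAbove_image
        ((continuousOn_setIntegral_Ioo_left hVaR).mono (Icc_subset_Icc_left hq.1))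
    exact adjES_le_max_ES_zero_of_setIntegral_le hX hc.le hg hg1 hq fun p hp ↦
      (le_csSup hbdd (mem_image_of_mem _ hp)).trans hsup

end ExpectedShortfall

/-- For the risk profile `g(p) = 1/(1-p)` on `[0,1)` with
`g(1) = ∞`, the adjusted Expected Shortfall is finite on all of `L¹`; moreover
`ES^g(X) ≤ max {ES_q(X), 0}` for any `q ∈ (0,1)` with
`sup_{p ∈ [q,1]} ∫_p^1 VaR_r(X) dr < 1`. -/
theorem stmt17 (μ : Measure Ω) [IsProbabilityMeasure μ] (hatomless : Atomless μ)
    (g : ℝ → EReal) (hgdef : ∀ p ∈ Set.Ico (0:ℝ) 1, g p = (((1 - p)⁻¹ : ℝ) : EReal))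
    (hg1 : g 1 = ⊤) (X : Ω → ℝ) (hX : Integrable X μ) :
    adjES μ g X ≠ ⊤ ∧
    ∀ q ∈ Set.Ioo (0:ℝ) 1,
      sSup ((fun p => ∫ r in Set.Ioo p 1, VaRr μ X r) '' Set.Icc q 1) < 1 →
      adjES μ g X ≤ max (ES μ X q) 0 := by
  have hgen := stmt17_general hX one_pos (fun p hp ↦ by rw [hgdef p hp, one_div]) hg1
  exact ⟨hgen.1, fun q hq hsup ↦ hgen.2 q (Ioo_subset_Ico_self hq) hsup.le⟩
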